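/- Let μ be a probability measure on ℝ^d and let y > 0. Suppose that ∫_0^y ‖ μ * (∂n_u/∂u) ‖₁ du < ∞ (the integrand being the L¹ norm of the function x ↦ ∫ (∂/∂u n_u)(x−z) dμ(z)). Then μ is absolutely continuous with respect to Lebesgue measure on ℝ^d. -/

import Mathlib

open MeasureTheory Real

/-- Density of the centered Gaussian on `ℝ^d` with covariance matrix `u • I`. -/
noncomputable def gaussD (d : ℕ) (u : ℝ) (x : EuclideanSpace ℝ (Fin d)) : ℝ :=
  (2 * Real.pi * u) ^ (-(d : ℝ) / 2) * Real.exp (-‖x‖ ^ 2 / (2 * u))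

/-- `∂/∂u n_u (x)`. -/
noncomputable def gaussDy (d : ℕ) (u : ℝ) (x : EuclideanSpace ℝ (Fin d)) : ℝ :=
  deriv (fun v => gaussD d v x) u

open Filter Topology
open scoped ENNReal

noncomputable def gaussH (d : ℕ) (u : ℝ) (x : EuclideanSpace ℝ (Fin d)) : ℝ :=
  gaussD d u x * (‖x‖ ^ 2 / (2 * u ^ 2) - d / (2 * u))

lemma gaussD_hasDeriv {d : ℕ} {u : ℝ} (hu : 0 < u) (x : EuclideanSpace ℝ (Fin d)) :
    HasDerivAt (fun v => gaussD d v x) (gaussH d u x) u := by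
  unfold gaussD gaussH gaussD
  have hp : 0 < 2 * Real.pi * u := by positivity
  have h1 : HasDerivAt (fun v : ℝ => 2 * Real.pi * v) (2 * Real.pi) u := by
    simpa using (hasDerivAt_id u).const_mul (2 * Real.pi)
  have h2 := h1.rpow_const (p := -(d : ℝ) / 2) (Or.inl hp.ne')
  have h3 : HasDerivAt (fun v : ℝ => -‖x‖ ^ 2 / (2 * v)) (‖x‖ ^ 2 / (2 * u ^ 2)) u := by
    have h4 := ((hasDerivAt_id u).const_mul 2).fun_inv (by simpa using hu.ne')
    have h5 := h4.const_mul (-‖x‖ ^ 2)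
    simp only [id] at h5
    refine h5.congr_deriv ?_
    field_simp
  refine (h2.mul h3.exp).congr_deriv ?_
  rw [Real.rpow_sub_one hp.ne']
  field_simp
  ring

lemma gaussDy_eq {d : ℕ} {u : ℝ} (hu : 0 < u) (x : EuclideanSpace ℝ (Fin d)) :
    gaussDy d u x = gaussH d u x := (gaussD_hasDeriv hu x).deriv

lemma gaussD_nonneg {d : ℕ} {u : ℝ} (hu : 0 < u) (x : EuclideanSpace ℝ (Fin d)) :
    0 ≤ gaussD d u x := by unfold gaussD; positivity

lemma gaussD_le {d : ℕ} {u : ℝ} (hu : 0 < u) (x : EuclideanSpace ℝ (Fin d)) :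
    gaussD d u x ≤ (2 * Real.pi * u) ^ (-(d : ℝ) / 2) := by
  unfold gaussD
  apply mul_le_of_le_one_right (by positivity)
  rw [Real.exp_le_one_iff]
  have : 0 ≤ ‖x‖ ^ 2 / (2 * u) := by positivity
  rw [neg_div]; linarith

lemma gaussH_le {d : ℕ} {u : ℝ} (hu : 0 < u) (x : EuclideanSpace ℝ (Fin d)) :
    |gaussH d u x| ≤ (2 * Real.pi * u) ^ (-(d : ℝ) / 2) * (2 / u + d / (2 * u))
      * Real.exp (-(1 / (4 * u)) * ‖x‖ ^ 2) := by
  unfold gaussH gaussD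
  rw [abs_mul, abs_of_nonneg (by positivity),
    mul_assoc ((2 * Real.pi * u) ^ (-(d : ℝ) / 2)), mul_assoc ((2 * Real.pi * u) ^ (-(d : ℝ) / 2))]
  apply mul_le_mul_of_nonneg_left _ (by positivity)
  set v := ‖x‖ ^ 2 / (4 * u) with hv
  have hv0 : 0 ≤ v := by positivity
  have e1 : -‖x‖ ^ 2 / (2 * u) = -v + -v := by rw [hv]; field_simp; ring
  have e2 : -(1 / (4 * u)) * ‖x‖ ^ 2 = -v := by rw [hv]; field_simp
  have e3 : ‖x‖ ^ 2 / (2 * u ^ 2) = 2 / u * v := by rw [hv]; field_simp; ring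
  rw [e1, e2, e3, Real.exp_add, mul_assoc, mul_comm (2 / u + _)]
  gcongr
  have hd : (0 : ℝ) ≤ d / (2 * u) := by positivity
  have h2 : (0 : ℝ) ≤ 2 / u := by positivity
  have h1 : |2 / u * v - d / (2 * u)| ≤ 2 / u * v + d / (2 * u) := by
    rw [abs_le]; constructor <;> nlinarith [mul_nonneg h2 hv0]
  have h3 : Real.exp (-v) ≤ 1 := by rw [Real.exp_le_one_iff]; linarith
  have h4 : Real.exp (-v) * v ≤ 1 := by
    rw [Real.exp_neg, inv_mul_le_iff₀ (Real.exp_pos _)]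
    linarith [Real.add_one_le_exp v]
  calc Real.exp (-v) * |2 / u * v - d / (2 * u)|
      ≤ Real.exp (-v) * (2 / u * v + d / (2 * u)) := by gcongr
    _ = 2 / u * (Real.exp (-v) * v) + Real.exp (-v) * (d / (2 * u)) := by ring
    _ ≤ 2 / u * 1 + 1 * (d / (2 * u)) := by gcongr
    _ = _ := by ring

lemma gaussH_le' {d : ℕ} {s u : ℝ} (hs : 0 < s) (hu : s ≤ u) (x : EuclideanSpace ℝ (Fin d)) :
    |gaussH d u x| ≤ (2 * Real.pi * s) ^ (-(d : ℝ) / 2) * (2 / s + d / (2 * s)) := by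
  have hu0 : 0 < u := hs.trans_le hu
  refine (gaussH_le hu0 x).trans ?_
  have h1 : Real.exp (-(1 / (4 * u)) * ‖x‖ ^ 2) ≤ 1 := by
    rw [Real.exp_le_one_iff, neg_mul]
    have : 0 ≤ (1 / (4 * u)) * ‖x‖ ^ 2 := by positivity
    linarith
  refine (mul_le_of_le_one_right (by positivity) h1).trans ?_
  have h2 : (2 * Real.pi * u) ^ (-(d : ℝ) / 2) ≤ (2 * Real.pi * s) ^ (-(d : ℝ) / 2) := by
    apply Real.rpow_le_rpow_of_nonpos (by positivity) (by gcongr)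
    rw [neg_div]; simp; positivity
  gcongr

lemma gaussD_meas (d : ℕ) :
    Measurable (fun p : ℝ × EuclideanSpace ℝ (Fin d) => gaussD d p.1 p.2) := by
  unfold gaussD
  fun_prop

lemma gaussH_meas (d : ℕ) :
    Measurable (fun p : ℝ × EuclideanSpace ℝ (Fin d) => gaussH d p.1 p.2) := by
  unfold gaussH
  have := gaussD_meas d
  fun_prop

lemma exp_integrable {d : ℕ} {b : ℝ} (hb : 0 < b) :
    Integrable (fun x : EuclideanSpace ℝ (Fin d) => Real.exp (-b * ‖x‖ ^ 2)) := by
  by_contra hc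
  have h1 := GaussianFourier.integral_rexp_neg_mul_sq_norm (V := EuclideanSpace ℝ (Fin d)) hb
  rw [integral_undef hc] at h1
  have : 0 < (π / b) ^ (Module.finrank ℝ (EuclideanSpace ℝ (Fin d)) / 2 : ℝ) := by positivity
  linarith

lemma gaussD_integral {d : ℕ} : ∫ x, gaussD d 1 x = 1 := by
  unfold gaussD
  rw [integral_const_mul]
  have h1 := GaussianFourier.integral_rexp_neg_mul_sq_norm (V := EuclideanSpace ℝ (Fin d))
    (b := 1 / 2) (by norm_num)
  have : ∀ x : EuclideanSpace ℝ (Fin d), -‖x‖ ^ 2 / (2 * 1) = -(1/2) * ‖x‖ ^ 2 := by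
    intro x; ring
  simp_rw [this]
  rw [h1, finrank_euclideanSpace, Fintype.card_fin,
    show 2 * Real.pi * 1 = Real.pi / (1/2) by ring, ← Real.rpow_add (by positivity)]
  rw [neg_div]; simp

lemma gaussD_integrable {d : ℕ} {u : ℝ} (hu : 0 < u) : Integrable (gaussD d u) := by
  unfold gaussD
  have h := (exp_integrable (d := d) (b := 1 / (2 * u)) (by positivity)).const_mul
    ((2 * Real.pi * u) ^ (-(d : ℝ) / 2))
  refine h.congr (Eventually.of_forall fun x => ?_)
  simp only
  congr 2
  field_simp

lemma gaussH_integrable {d : ℕ} {u : ℝ} (hu : 0 < u) : Integrable (gaussH d u) := by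
  have h := (exp_integrable (d := d) (b := 1 / (4 * u)) (by positivity)).const_mul
    ((2 * Real.pi * u) ^ (-(d : ℝ) / 2) * (2 / u + d / (2 * u)))
  refine h.mono' ?_ (Eventually.of_forall fun x => ?_)
  · exact ((gaussH_meas d).comp (by fun_prop : Measurable fun x => (u, x))).aestronglyMeasurable
  · exact gaussH_le hu x

lemma G_integrable {d : ℕ} (μ : Measure (EuclideanSpace ℝ (Fin d)))
    [IsProbabilityMeasure μ] {u : ℝ} (hu : 0 < u) :
    Integrable (fun x => ∫ z, gaussH d u (x - z) ∂μ) := by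
  have : Integrable (fun p : EuclideanSpace ℝ (Fin d) × EuclideanSpace ℝ (Fin d) =>
      gaussH d u (p.1 - p.2)) (volume.prod μ) := by
    have hm : Measurable (fun p : EuclideanSpace ℝ (Fin d) × EuclideanSpace ℝ (Fin d) =>
      gaussH d u (p.1 - p.2)) := (gaussH_meas d).comp
        (by fun_prop : Measurable fun p : EuclideanSpace ℝ (Fin d) × EuclideanSpace ℝ (Fin d) =>
          (u, p.1 - p.2))
    rw [integrable_prod_iff' hm.aestronglyMeasurable]
    refine ⟨Eventually.of_forall fun z => (gaussH_integrable hu).comp_sub_right z, ?_⟩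
    have : ∀ z, ∫ x, ‖gaussH d u (x - z)‖ = ∫ x, ‖gaussH d u x‖ := fun z =>
      integral_sub_right_eq_self (fun x => ‖gaussH d u x‖) z
    simp only [this]
    exact integrable_const _
  exact this.integral_prod_left

lemma ftc {d : ℕ} (μ : Measure (EuclideanSpace ℝ (Fin d)))
    [IsProbabilityMeasure μ] {s t : ℝ} (hs : 0 < s) (hst : s ≤ t)
    (x : EuclideanSpace ℝ (Fin d)) :
    ∫ u in s..t, ∫ z, gaussH d u (x - z) ∂μ =
      (∫ z, gaussD d t (x - z) ∂μ) - ∫ z, gaussD d s (x - z) ∂μ := by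
  have hD : ∀ u, 0 < u → Integrable (fun z => gaussD d u (x - z)) μ := by
    intro u hu
    refine Integrable.of_bound ?_ ((2 * Real.pi * u) ^ (-(d : ℝ) / 2))
      (Eventually.of_forall fun z => ?_)
    · exact ((gaussD_meas d).comp (by fun_prop : Measurable fun z => (u, x - z))).aestronglyMeasurable
    · rw [Real.norm_of_nonneg (gaussD_nonneg hu _)]; exact gaussD_le hu _
  rw [← integral_sub (hD t (hs.trans_le hst)) (hD s hs), intervalIntegral_integral_swap]
  · congr 1; ext z
    apply intervalIntegral.integral_eq_sub_of_hasDerivAt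
    · intro u hu
      rw [Set.uIcc_of_le hst] at hu
      exact gaussD_hasDeriv (hs.trans_le hu.1) _
    · rw [intervalIntegrable_iff, Set.uIoc_of_le hst]
      refine IntegrableOn.of_bound (by simp) ?_
        ((2 * Real.pi * s) ^ (-(d : ℝ) / 2) * (2 / s + d / (2 * s))) ?_
      · exact ((gaussH_meas d).comp (by fun_prop : Measurable fun u => (u, x - z))).aestronglyMeasurable
      · filter_upwards [ae_restrict_mem measurableSet_Ioc] with u hu
        exact gaussH_le' hs hu.1.le _
  · rw [Set.uIoc_of_le hst]
    refine Integrable.of_bound ?_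
      ((2 * Real.pi * s) ^ (-(d : ℝ) / 2) * (2 / s + d / (2 * s))) ?_
    · exact ((gaussH_meas d).comp (by fun_prop : Measurable
        fun p : ℝ × EuclideanSpace ℝ (Fin d) => (p.1, x - p.2))).aestronglyMeasurable
    · have : ∀ᵐ p ∂((volume.restrict (Set.Ioc s t)).prod μ), p.1 ∈ Set.Ioc s t :=
        Measure.quasiMeasurePreserving_fst.ae (ae_restrict_mem measurableSet_Ioc)
      filter_upwards [this] with p hp
      exact gaussH_le' hs hp.1.le _

lemma G_meas {d : ℕ} (μ : Measure (EuclideanSpace ℝ (Fin d))) [IsProbabilityMeasure μ] :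
    Measurable (fun p : ℝ × EuclideanSpace ℝ (Fin d) => ∫ z, gaussH d p.1 (p.2 - z) ∂μ) := by
  have : StronglyMeasurable
      (fun q : (ℝ × EuclideanSpace ℝ (Fin d)) × EuclideanSpace ℝ (Fin d) =>
        gaussH d q.1.1 (q.1.2 - q.2)) :=
    ((gaussH_meas d).comp (by fun_prop : Measurable
      fun q : (ℝ × EuclideanSpace ℝ (Fin d)) × EuclideanSpace ℝ (Fin d) =>
        (q.1.1, q.1.2 - q.2))).stronglyMeasurable
  exact this.integral_prod_right'.measurable

/-- mass of `U` under the smoothed measure -/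
noncomputable def nuU {d : ℕ} (μ : Measure (EuclideanSpace ℝ (Fin d)))
    (U : Set (EuclideanSpace ℝ (Fin d))) (s : ℝ) : ℝ≥0∞ :=
  ∫⁻ x in U, ENNReal.ofReal (∫ z, gaussD d s (x - z) ∂μ)

lemma nuU_le {d : ℕ} (μ : Measure (EuclideanSpace ℝ (Fin d)))
    [IsProbabilityMeasure μ] (U : Set (EuclideanSpace ℝ (Fin d))) {s t : ℝ}
    (hs : 0 < s) (hst : s ≤ t) :
    nuU μ U s ≤ nuU μ U t + ∫⁻ u in Set.Ioc 0 t,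
        ENNReal.ofReal (∫ x, |∫ z, gaussDy d u (x - z) ∂μ|) := by
  have hG := G_meas μ
  have key : ∀ x : EuclideanSpace ℝ (Fin d), ENNReal.ofReal (∫ z, gaussD d s (x - z) ∂μ) ≤
      ENNReal.ofReal (∫ z, gaussD d t (x - z) ∂μ) +
        ∫⁻ u in Set.Ioc s t, ‖∫ z, gaussH d u (x - z) ∂μ‖ₑ := by
    intro x
    have h1 := ftc μ hs hst x
    rw [intervalIntegral.integral_of_le hst] at h1
    have h2 := enorm_integral_le_lintegral_enorm (μ := volume.restrict (Set.Ioc s t))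
      (fun u => ∫ z, gaussH d u (x - z) ∂μ)
    refine le_trans ?_ (add_le_add_right h2 _)
    rw [← ofReal_norm, ← ENNReal.ofReal_add _ (norm_nonneg _)]
    · apply ENNReal.ofReal_le_ofReal
      rw [h1, Real.norm_eq_abs]
      linarith [neg_abs_le ((∫ z, gaussD d t (x - z) ∂μ) - ∫ z, gaussD d s (x - z) ∂μ)]
    · exact integral_nonneg fun z => gaussD_nonneg (hs.trans_le hst) _
  unfold nuU
  have hGm : Measurable (Function.uncurry fun (x : EuclideanSpace ℝ (Fin d)) (u : ℝ) =>
      ‖∫ z, gaussH d u (x - z) ∂μ‖ₑ) :=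
    (hG.comp (by fun_prop : Measurable
        fun p : EuclideanSpace ℝ (Fin d) × ℝ => (p.2, p.1))).enorm
  calc _ ≤ ∫⁻ x in U, (ENNReal.ofReal (∫ z, gaussD d t (x - z) ∂μ) +
        ∫⁻ u in Set.Ioc s t, ‖∫ z, gaussH d u (x - z) ∂μ‖ₑ) := lintegral_mono key
    _ = (∫⁻ x in U, ENNReal.ofReal (∫ z, gaussD d t (x - z) ∂μ)) +
        ∫⁻ x in U, ∫⁻ u in Set.Ioc s t, ‖∫ z, gaussH d u (x - z) ∂μ‖ₑ := by
      rw [lintegral_add_right]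
      exact hGm.lintegral_prod_right'
    _ ≤ _ := by
      gcongr
      rw [lintegral_lintegral_swap hGm.aemeasurable]
      calc _ ≤ ∫⁻ u in Set.Ioc s t,
                ENNReal.ofReal (∫ x, |∫ z, gaussDy d u (x - z) ∂μ|) := by
              apply setLIntegral_mono' measurableSet_Ioc
              intro u hu
              have hu0 : 0 < u := hs.trans hu.1
              simp only [gaussDy_eq hu0]
              rw [ofReal_integral_eq_lintegral_ofReal (G_integrable μ hu0).abs
                (Eventually.of_forall fun x => abs_nonneg _)]
              simp only [← Real.norm_eq_abs, ofReal_norm]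
              exact setLIntegral_le_lintegral _ _
        _ ≤ _ := lintegral_mono_set (Set.Ioc_subset_Ioc_left hs.le)

lemma nuU_le_vol {d : ℕ} (μ : Measure (EuclideanSpace ℝ (Fin d)))
    [IsProbabilityMeasure μ] (U : Set (EuclideanSpace ℝ (Fin d))) {t : ℝ} (ht : 0 < t) :
    nuU μ U t ≤ ENNReal.ofReal ((2 * Real.pi * t) ^ (-(d : ℝ) / 2)) * volume U := by
  unfold nuU
  rw [← setLIntegral_const]
  apply lintegral_mono
  intro x
  apply ENNReal.ofReal_le_ofReal
  have := integral_mono_of_nonneg (μ := μ) (f := fun z => gaussD d t (x - z))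
    (g := fun z => (2 * Real.pi * t) ^ (-(d : ℝ) / 2))
    (Eventually.of_forall fun z => gaussD_nonneg ht _) (integrable_const _)
    (Eventually.of_forall fun z => gaussD_le ht _)
  simpa using this

lemma gaussD_decay (d : ℕ) : Tendsto (fun x : EuclideanSpace ℝ (Fin d) =>
    ‖x‖ ^ Module.finrank ℝ (EuclideanSpace ℝ (Fin d)) * gaussD d 1 x)
    (Bornology.cobounded _) (𝓝 0) := by
  set n := Module.finrank ℝ (EuclideanSpace ℝ (Fin d))
  have h1 := ((Real.tendsto_pow_mul_exp_neg_atTop_nhds_zero n).comp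
    (tendsto_norm_cobounded_atTop (E := EuclideanSpace ℝ (Fin d)))).const_mul
      ((2 * Real.pi * 1) ^ (-(d : ℝ) / 2) * Real.exp (1 / 2))
  rw [mul_zero] at h1
  refine squeeze_zero (fun x => mul_nonneg (by positivity) (gaussD_nonneg one_pos _)) ?_ h1
  intro x
  have h2 : Real.exp (-‖x‖ ^ 2 / (2 * 1)) ≤ Real.exp (1 / 2) * Real.exp (-‖x‖) := by
    rw [← Real.exp_add]
    apply Real.exp_le_exp.2
    nlinarith [sq_nonneg (‖x‖ - 1)]
  unfold gaussD
  simp only [Function.comp]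
  calc _ ≤ ‖x‖ ^ n * ((2 * Real.pi * 1) ^ (-(d : ℝ) / 2) *
        (Real.exp (1 / 2) * Real.exp (-‖x‖))) := by gcongr
    _ = _ := by ring

lemma gaussD_scale (d : ℕ) {c : ℝ} (hc : 0 < c) (x : EuclideanSpace ℝ (Fin d)) :
    gaussD d (1 / c ^ 2) x = c ^ d * gaussD d 1 (c • x) := by
  unfold gaussD
  rw [← mul_assoc, norm_smul, Real.norm_of_nonneg hc.le]
  congr 1
  · rw [mul_one, Real.mul_rpow (by positivity) (by positivity), mul_comm]
    congr 1
    rw [one_div, Real.inv_rpow (by positivity), ← Real.rpow_neg (by positivity),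
      ← Real.rpow_natCast c 2, ← Real.rpow_mul hc.le, ← Real.rpow_natCast c d]
    congr 1
    push_cast; ring
  · congr 1
    field_simp

lemma gaussD_symm (d : ℕ) (u : ℝ) (x z : EuclideanSpace ℝ (Fin d)) :
    gaussD d u (x - z) = gaussD d u (z - x) := by
  unfold gaussD; rw [norm_sub_rev]

lemma lim_point {d : ℕ} {U : Set (EuclideanSpace ℝ (Fin d))} (hU : IsOpen U)
    (hv : volume U < ⊤) {z : EuclideanSpace ℝ (Fin d)} (hz : z ∈ U) :
    Tendsto (fun c : ℝ => ∫⁻ x in U, ENNReal.ofReal (gaussD d (1 / c ^ 2) (x - z)))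
      atTop (𝓝 1) := by
  have hg : Integrable (U.indicator fun _ : EuclideanSpace ℝ (Fin d) => (1 : ℝ)) :=
    (integrable_indicator_iff hU.measurableSet).2 (integrableOn_const hv.ne)
  have hc : ContinuousAt (U.indicator fun _ : EuclideanSpace ℝ (Fin d) => (1 : ℝ)) z := by
    refine continuousAt_const.congr (f := fun _ => (1 : ℝ)) ?_
    filter_upwards [hU.mem_nhds hz] with x hx
    simp [hx]
  have h := tendsto_integral_comp_smul_smul_of_integrable' (φ := gaussD d 1)
    (fun x => gaussD_nonneg one_pos x) gaussD_integral (gaussD_decay d) hg hc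
  rw [Set.indicator_of_mem hz] at h
  have h' := ENNReal.tendsto_ofReal h
  rw [ENNReal.ofReal_one] at h'
  refine h'.congr' ?_
  filter_upwards [eventually_gt_atTop 0] with c hc
  have hc2 : 0 < 1 / c ^ 2 := by positivity
  rw [← ofReal_integral_eq_lintegral_ofReal]
  · rw [← integral_indicator hU.measurableSet]
    congr 2
    ext x
    rw [finrank_euclideanSpace, Fintype.card_fin, ← gaussD_scale d hc, gaussD_symm]
    by_cases hx : x ∈ U <;> simp [hx]
  · exact ((gaussD_integrable hc2).comp_sub_right z).integrableOn
  · exact Eventually.of_forall fun x => gaussD_nonneg hc2 _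

lemma nuU_eq {d : ℕ} (μ : Measure (EuclideanSpace ℝ (Fin d)))
    [IsProbabilityMeasure μ] (U : Set (EuclideanSpace ℝ (Fin d))) {s : ℝ} (hs : 0 < s) :
    nuU μ U s = ∫⁻ z, (∫⁻ x in U, ENNReal.ofReal (gaussD d s (x - z))) ∂μ := by
  have hm : Measurable (Function.uncurry fun x z : EuclideanSpace ℝ (Fin d) =>
      ENNReal.ofReal (gaussD d s (x - z))) :=
    ((gaussD_meas d).comp (by fun_prop : Measurable
      fun q : EuclideanSpace ℝ (Fin d) × EuclideanSpace ℝ (Fin d) =>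
        (s, q.1 - q.2))).ennreal_ofReal
  rw [← lintegral_lintegral_swap hm.aemeasurable]
  unfold nuU
  congr 1; ext x
  rw [ofReal_integral_eq_lintegral_ofReal]
  · refine Integrable.of_bound ?_ ((2 * Real.pi * s) ^ (-(d : ℝ) / 2))
      (Eventually.of_forall fun z => ?_)
    · exact ((gaussD_meas d).comp (by fun_prop : Measurable fun z => (s, x - z))).aestronglyMeasurable
    · rw [Real.norm_of_nonneg (gaussD_nonneg hs _)]; exact gaussD_le hs _
  · exact Eventually.of_forall fun z => gaussD_nonneg hs _

lemma le_liminf_nuU {d : ℕ} (μ : Measure (EuclideanSpace ℝ (Fin d)))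
    [IsProbabilityMeasure μ] {U : Set (EuclideanSpace ℝ (Fin d))} (hU : IsOpen U)
    (hv : volume U < ⊤) :
    μ U ≤ liminf (fun c : ℝ => nuU μ U (1 / c ^ 2)) atTop := by
  have e : (fun c : ℝ => nuU μ U (1 / c ^ 2)) =ᶠ[atTop] fun c : ℝ =>
      ∫⁻ z, (∫⁻ x in U, ENNReal.ofReal (gaussD d (1 / c ^ 2) (x - z))) ∂μ := by
    filter_upwards [eventually_gt_atTop 0] with c hc
    exact nuU_eq μ U (by positivity)
  rw [liminf_congr e]
  refine le_trans ?_ (lintegral_liminf_le ?_)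
  · rw [← lintegral_indicator_one hU.measurableSet]
    apply lintegral_mono
    intro z
    by_cases hz : z ∈ U
    · simp only [(lim_point hU hv hz).liminf_eq]
      simp [hz]
    · simp [hz]
  · intro c
    have hm : Measurable (Function.uncurry fun z x : EuclideanSpace ℝ (Fin d) =>
        ENNReal.ofReal (gaussD d (1 / c ^ 2) (x - z))) :=
      ((gaussD_meas d).comp (by fun_prop : Measurable
        fun q : EuclideanSpace ℝ (Fin d) × EuclideanSpace ℝ (Fin d) =>
          (1 / c ^ 2, q.2 - q.1))).ennreal_ofReal
    exact hm.lintegral_prod_right'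

theorem statement5 {d : ℕ} (μ : Measure (EuclideanSpace ℝ (Fin d)))
    [IsProbabilityMeasure μ] (y : ℝ) (hy : 0 < y)
    (h : ∫⁻ u in Set.Ioo (0 : ℝ) y,
        ENNReal.ofReal (∫ x, |∫ z, gaussDy d u (x - z) ∂μ|) < ⊤) :
    μ ≪ volume := by
  intro A hA
  set F : ℝ → ℝ≥0∞ := fun u => ENNReal.ofReal (∫ x, |∫ z, gaussDy d u (x - z) ∂μ|) with hF
  have h1 : ∀ t > 0, μ A ≤ ∫⁻ u in Set.Ioc 0 t, F u := by
    intro t ht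
    set C := ENNReal.ofReal ((2 * Real.pi * t) ^ (-(d : ℝ) / 2)) with hC
    have hCt : C ≠ ⊤ := ENNReal.ofReal_ne_top
    have hC0 : C ≠ 0 := by
      have : 0 < (2 * Real.pi * t) ^ (-(d : ℝ) / 2) := by positivity
      simpa [hC] using this
    refine ENNReal.le_of_forall_pos_le_add fun ε hε _ => ?_
    have hε' : (ε : ℝ≥0∞) / C ≠ 0 := by
      simp [ENNReal.div_eq_zero_iff, hε.ne', hCt]
    obtain ⟨U, hAU, hU, hUv⟩ := A.exists_isOpen_lt_of_lt (μ := volume) (ε / C)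
      (by rw [hA]; exact pos_iff_ne_zero.2 hε')
    calc μ A ≤ μ U := measure_mono hAU
      _ ≤ liminf (fun c : ℝ => nuU μ U (1 / c ^ 2)) atTop :=
        le_liminf_nuU μ hU (hUv.trans_le le_top)
      _ ≤ nuU μ U t + ∫⁻ u in Set.Ioc 0 t, F u := by
        refine (liminf_le_limsup).trans (limsup_le_of_le (h := ?_))
        have : Tendsto (fun c : ℝ => 1 / c ^ 2) atTop (𝓝 0) := by
          simpa using tendsto_pow_neg_atTop (𝕜 := ℝ) (n := 2) (by norm_num)
        filter_upwards [this.eventually (eventually_le_nhds ht), eventually_gt_atTop 0] with c h1 h2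
        exact nuU_le μ U (by positivity) h1
      _ ≤ C * volume U + ∫⁻ u in Set.Ioc 0 t, F u := by
        gcongr; exact nuU_le_vol μ U ht
      _ ≤ ε + ∫⁻ u in Set.Ioc 0 t, F u := by
        gcongr
        calc C * volume U ≤ C * (ε / C) := by gcongr
          _ = ε := ENNReal.mul_div_cancel hC0 hCt
      _ = _ := add_comm _ _
  have h2 : Tendsto (fun t : ℝ => ∫⁻ u in Set.Ioc 0 t, F u ∂(volume.restrict (Set.Ioo 0 y)))
      (𝓝[>] 0) (𝓝 0) := by
    apply tendsto_setLIntegral_zero h.ne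
    have h3 : Tendsto (fun t : ℝ => ENNReal.ofReal t) (𝓝[>] 0) (𝓝 0) := by
      have := (ENNReal.continuous_ofReal.tendsto 0).mono_left (nhdsWithin_le_nhds (s := Set.Ioi 0))
      simpa using this
    refine tendsto_of_tendsto_of_tendsto_of_le_of_le tendsto_const_nhds h3
      (fun _ => zero_le) fun t => ?_
    refine (Measure.restrict_apply_le _ _).trans ?_
    simp
  refine le_antisymm (ge_of_tendsto h2 ?_) zero_le
  filter_upwards [Ioo_mem_nhdsGT hy] with t ht
  refine (h1 t ht.1).trans_eq ?_
  rw [Measure.restrict_restrict measurableSet_Ioc, Set.inter_eq_left.2]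
  intro u hu
  exact ⟨hu.1, hu.2.trans_lt ht.2⟩
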